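/- Let c = √(27/2) and for k ≥ 2 let φ(k) = lim_{N→∞, N ≡ k (mod 2)} N^{5/2} c^{−N} C₀(N,k), which exists in (0,∞). Let D : ℕ×ℕ×ℕ → [0,∞) satisfy: (i) D(N,m,m₂) = 0 unless m ≥ 2, m₂ ≥ 2 and N ≡ m + m₂ (mod 2); (ii) for each m, m₂ ≥ 2 and all sufficiently large N, the Tutte root-edge-deletion recurrence D(N,m,m₂) = D(N−1, m+1, m₂) + C₀(N−1, m+m₂+1) + Σ_{N₁+N₂=N−1} Σ_{k₁+k₂=m+1} D(N₁,k₁,m₂)·C₀(N₂,k₂); (iii) for m₂ ∈ {2,3} and every m ≥ 2, and for m ∈ {2,3} and every m₂ ≥ 2, the limit lim_{N→∞, N ≡ m+m₂ (mod 2)} N^{3/2} c^{−N} D(N,m,m₂) exists in (0,∞). Then for ALL m, m₂ ≥ 2 the limit φ(m,m₂) := lim_{N→∞, N ≡ m+m₂ (mod 2)} N^{3/2} c^{−N} D(N,m,m₂) exists and is finite. -/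

import Mathlib

/-!
The recurrence is solved for its first term: `D(N−1, m+1, m₂)` equals `D(N, m, m₂)` minus a
`C₀`-term and finitely many convolutions of `D(·, k₁, m₂)` with `C₀(·, k₂)`. Supports force
`2 ≤ k₁ ≤ m − 1` in every nonzero convolution, so for fixed `m₂` strong induction on `m`, starting
from the given limit at `m = 2`, reduces the claim to the asymptotics of a convolution. After
division by `c^N` the `C₀`-term has order `N^{-5/2}` and disappears in the limit.

The convolution is treated in `tendsto_conv_three_halves`. If `i^{3/2} a i` tends to `α` and
`j^{5/2} b j` converges (each along a parity class), then `n^{3/2} ∑_{i+j=n} a i b j` tends to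
`α ∑ b`. Indeed `(i+j)^{3/2} = i^{3/2} + O(i^{1/2} j + j^{3/2})`, and each of the three resulting
sums is the convolution of a convergent sequence with a summable one, whose limit is given by
dominated convergence (`tendsto_conv`): the first is `α ∑ b`, while in the other two the convergent
factors `i^{1/2} a i` and `j^{3/2} b j` tend to `0`.
-/

open Finset

/-- `C₀ N m` is the number of rooted triangulations of the disk with `N` triangles and
`m` boundary edges: for `m ≥ 2`, `N ≥ m`, `N ≡ m (mod 2)` and `j = (N−m)/2` it equals
`2^{j+2}·(2m+3j−1)!·(2m−3)! / ((j+1)!·(2m+2j)!·((m−2)!)²)`, and `0` otherwise. -/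
noncomputable def C₀ (N m : ℕ) : ℝ :=
  if 2 ≤ m ∧ m ≤ N ∧ N % 2 = m % 2 then
    (2 : ℝ) ^ ((N - m) / 2 + 2) *
      (Nat.factorial (2 * m + 3 * ((N - m) / 2) - 1) : ℝ) *
      (Nat.factorial (2 * m - 3) : ℝ) /
      ((Nat.factorial ((N - m) / 2 + 1) : ℝ) *
        (Nat.factorial (2 * m + 2 * ((N - m) / 2)) : ℝ) *
        (Nat.factorial (m - 2) : ℝ) ^ 2)
  else 0

open Filter

open Topology

/-! ### Limits along a parity class -/

/-- The filter of limits `n → ∞` restricted to `n ≡ p (mod 2)`. -/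
def parityAtTop (p : ℕ) : Filter ℕ := atTop ⊓ 𝓟 {n | n % 2 = p % 2}

lemma tendsto_parityAtTop_iff {f : ℕ → ℝ} {p : ℕ} {l : Filter ℝ} :
    Tendsto f (parityAtTop p) l ↔ Tendsto (fun n => f (p + 2 * n)) atTop l := by
  constructor
  · intro h
    refine h.comp ?_
    rw [parityAtTop, tendsto_inf, tendsto_principal]
    refine ⟨tendsto_atTop_mono (fun n => ?_) tendsto_id, Eventually.of_forall fun n => ?_⟩
    · simp only [id]; omega
    · simp
  · intro h s hs
    obtain ⟨t, ht⟩ := eventually_atTop.1 (h hs)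
    rw [Filter.mem_map, parityAtTop, mem_inf_principal]
    filter_upwards [eventually_ge_atTop (p + 2 * t)] with n hn hp
    have hp' : n % 2 = p % 2 := hp
    have := ht ((n - p) / 2) (by omega)
    have e : p + 2 * ((n - p) / 2) = n := by omega
    simpa [e] using this

lemma parityAtTop_le_atTop (p : ℕ) : parityAtTop p ≤ atTop := inf_le_left

lemma eventually_parity (p : ℕ) : ∀ᶠ n in parityAtTop p, n % 2 = p % 2 :=
  mem_inf_of_right (mem_principal_self _)

lemma tendsto_add_one_parityAtTop {p q : ℕ} (h : q % 2 = (p + 1) % 2) :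
    Tendsto (fun n => n + 1) (parityAtTop q) (parityAtTop p) := by
  refine tendsto_inf.2 ⟨(tendsto_add_atTop_nat 1).mono_left (parityAtTop_le_atTop q), ?_⟩
  refine tendsto_principal.2 ((eventually_parity q).mono fun n hn => ?_)
  change (n + 1) % 2 = p % 2; omega

/-- Overwriting a sequence by its limit `L` on the wrong parity class yields a genuinely
convergent sequence. -/
lemma tendsto_fill {f : ℕ → ℝ} {p : ℕ} {L : ℝ} (h : Tendsto f (parityAtTop p) (𝓝 L)) :
    Tendsto (fun n => if n % 2 = p % 2 then f n else L) atTop (𝓝 L) :=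
  Tendsto.if h tendsto_const_nhds

lemma bounded_of_parity {f : ℕ → ℝ} {p : ℕ} {L : ℝ} (h : Tendsto f (parityAtTop p) (𝓝 L))
    (h0 : ∀ n, n % 2 ≠ p % 2 → f n = 0) : ∃ K, 0 ≤ K ∧ ∀ n, |f n| ≤ K := by
  obtain ⟨K, hK⟩ := (tendsto_fill h).abs.bddAbove_range
  refine ⟨max K 0, le_max_right _ _, fun n => ?_⟩
  by_cases hn : n % 2 = p % 2
  · have := hK ⟨n, rfl⟩
    simp only [hn, if_true] at this
    exact this.trans (le_max_left _ _)
  · simp [h0 n hn]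

/-! ### Convolutions of asymptotic sequences -/

/-- Tannery's theorem for convolutions: convolving a convergent sequence with a summable one
multiplies the limit by the total mass. -/
lemma tendsto_conv {u b : ℕ → ℝ} {l : ℝ} (hu : Tendsto u atTop (𝓝 l))
    (hb : Summable fun n => |b n|) :
    Tendsto (fun n => ∑ x ∈ antidiagonal n, u x.1 * b x.2) atTop (𝓝 (l * ∑' j, b j)) := by
  obtain ⟨K, hK⟩ := hu.abs.bddAbove_range
  have hK' : ∀ n, |u n| ≤ K := fun n => hK ⟨n, rfl⟩
  have hK0 : 0 ≤ K := (abs_nonneg _).trans (hK' 0)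
  have key : Tendsto (fun n => ∑' j, if j ∈ range (n + 1) then u (n - j) * b j else 0) atTop
      (𝓝 (∑' j, l * b j)) := by
    refine tendsto_tsum_of_dominated_convergence (hb.mul_left K) (fun j => ?_)
      (Eventually.of_forall fun n j => ?_)
    · have : Tendsto (fun n => u (n - j) * b j) atTop (𝓝 (l * b j)) :=
        (hu.comp (tendsto_sub_atTop_nat j)).mul_const _
      refine this.congr' ?_
      filter_upwards [eventually_ge_atTop j] with n hn
      rw [if_pos (mem_range.2 (by omega))]
    · split_ifs
      · rw [Real.norm_eq_abs, abs_mul]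
        exact mul_le_mul_of_nonneg_right (hK' _) (abs_nonneg _)
      · simpa using mul_nonneg hK0 (abs_nonneg (b j))
  rw [tsum_mul_left] at key
  refine key.congr fun n => ?_
  rw [tsum_eq_sum (s := range (n + 1)) (fun j hj => if_neg hj),
    ← Finset.Nat.sum_antidiagonal_swap, Finset.Nat.sum_antidiagonal_eq_sum_range_succ_mk]
  exact sum_congr rfl fun j hj => by rw [if_pos hj]; rfl

/-- Elementary bound on the cost of replacing `(i + j)^{3/2}` by `i^{3/2}`. -/
lemma three_halves_sub_le {x y : ℝ} (hx : 0 ≤ x) (hy : 0 ≤ y) :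
    0 ≤ (x + y) * √(x + y) - x * √x ∧
      (x + y) * √(x + y) - x * √x ≤ 2 * (√x * y) + y * √y := by
  have hs := Real.sqrt_nonneg x
  have ht := Real.sqrt_nonneg y
  have hr := Real.sqrt_nonneg (x + y)
  have hs2 := Real.sq_sqrt hx
  have ht2 := Real.sq_sqrt hy
  have hr2 := Real.sq_sqrt (add_nonneg hx hy)
  have hsr : √x ≤ √(x + y) := Real.sqrt_le_sqrt (by linarith)
  have hrst : √(x + y) ≤ √x + √y := by
    refine Real.sqrt_le_iff.2 ⟨by positivity, ?_⟩
    nlinarith [mul_nonneg hs ht]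
  generalize √x = s at *
  generalize √y = t at *
  generalize √(x + y) = r at *
  subst hs2 ht2
  constructor
  · nlinarith [mul_nonneg (sq_nonneg s) (sub_nonneg.2 hsr), mul_nonneg (sq_nonneg t) hr]
  · have h1 : s ^ 2 * (r - s) ≤ s * t ^ 2 := by
      have : s * (r - s) ≤ t ^ 2 := by nlinarith
      nlinarith
    nlinarith [mul_nonneg (sq_nonneg t) (sub_nonneg.2 hrst)]

lemma rpow_three_halves (n : ℕ) : (n : ℝ) ^ ((3 : ℝ) / 2) = n * √n := by
  rcases Nat.eq_zero_or_pos n with rfl | h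
  · norm_num
  · have : (0 : ℝ) < n := by exact_mod_cast h
    rw [Real.sqrt_eq_rpow, show (3 : ℝ) / 2 = 1 + 1 / 2 by norm_num, Real.rpow_add this,
      Real.rpow_one]

lemma rpow_five_halves (n : ℕ) : (n : ℝ) ^ ((5 : ℝ) / 2) = n * (n * √n) := by
  rcases Nat.eq_zero_or_pos n with rfl | h
  · norm_num
  · have : (0 : ℝ) < n := by exact_mod_cast h
    rw [← rpow_three_halves, show (5 : ℝ) / 2 = 1 + 3 / 2 by norm_num, Real.rpow_add this,
      Real.rpow_one]

lemma summable_of_three_halves_bound {a : ℕ → ℝ} {K : ℝ}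
    (h : ∀ n : ℕ, |(n * √n : ℝ) * a n| ≤ K) : Summable fun n => |a n| := by
  refine summable_of_isBigO_nat (g := fun n : ℕ => 1 / (n : ℝ) ^ ((3 : ℝ) / 2))
    (Real.summable_one_div_nat_rpow.2 (by norm_num)) (Asymptotics.IsBigO.of_bound K ?_)
  filter_upwards [eventually_gt_atTop 0] with n hn
  have hn' : (0 : ℝ) < n := by exact_mod_cast hn
  have hp : 0 < (n * √n : ℝ) := by positivity
  have := h n
  rw [abs_mul, abs_of_pos hp] at this
  rw [rpow_three_halves, Real.norm_eq_abs, abs_abs, Real.norm_eq_abs,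
    abs_of_pos (one_div_pos.2 hp), mul_one_div, le_div_iff₀ hp]
  linarith

/-- If `n * f n` is bounded then `f n → 0`. -/
lemma tendsto_zero_of_mul_bounded {f : ℕ → ℝ} {K : ℝ} (h : ∀ n : ℕ, |(n : ℝ) * f n| ≤ K) :
    Tendsto f atTop (𝓝 0) := by
  have h1 : Tendsto (fun n : ℕ => K / (n : ℝ)) atTop (𝓝 0) :=
    tendsto_const_nhds.div_atTop tendsto_natCast_atTop_atTop
  refine squeeze_zero_norm' ?_ h1
  filter_upwards [eventually_gt_atTop 0] with n hn
  have hn' : (0 : ℝ) < n := by exact_mod_cast hn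
  have := h n
  rw [abs_mul, abs_of_pos hn'] at this
  rw [Real.norm_eq_abs, le_div_iff₀ hn']
  linarith

/-- A sequence of order `n^{-3/2}` convolved with one of order `n^{-5/2}` (each living on a
parity class) is again of order `n^{-3/2}`: only the total mass of the second one matters. -/
lemma tendsto_conv_three_halves {a b : ℕ → ℝ} {p q : ℕ} {α β : ℝ}
    (ha0 : ∀ n, 0 ≤ a n) (hb0 : ∀ n, 0 ≤ b n)
    (hap : ∀ n, n % 2 ≠ p % 2 → a n = 0) (hbq : ∀ n, n % 2 ≠ q % 2 → b n = 0)
    (ha : Tendsto (fun n : ℕ => (n * √n : ℝ) * a n) (parityAtTop p) (𝓝 α))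
    (hb : Tendsto (fun n : ℕ => (n * (n * √n) : ℝ) * b n) (parityAtTop q) (𝓝 β)) :
    Tendsto (fun n : ℕ => (n * √n : ℝ) * ∑ x ∈ antidiagonal n, a x.1 * b x.2)
      (parityAtTop (p + q)) (𝓝 (α * ∑' j, b j)) := by
  obtain ⟨K, hK0, hK⟩ := bounded_of_parity ha (fun n hn => by simp [hap n hn])
  obtain ⟨M, hM0, hM⟩ := bounded_of_parity hb (fun n hn => by simp [hbq n hn])
  have sa : Summable fun n => |a n| := summable_of_three_halves_bound hK
  have snb : Summable fun n : ℕ => |(n : ℝ) * b n| :=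
    summable_of_three_halves_bound (K := M) fun n => by
      convert hM n using 2; ring
  have sb : Summable fun n => |b n| := by
    refine summable_of_isBigO_nat snb (Asymptotics.IsBigO.of_bound 1 ?_)
    filter_upwards [eventually_ge_atTop 1] with n hn
    have hn' : (1 : ℝ) ≤ n := by exact_mod_cast hn
    simp only [Real.norm_eq_abs, abs_abs, one_mul, abs_mul]
    rw [abs_of_nonneg (by linarith : (0 : ℝ) ≤ n)]
    nlinarith [abs_nonneg (b n)]
  -- The main term, with `i^{3/2}` in place of `(i + j)^{3/2}`; since `b` vanishes off its parity
  -- class, filling in the wrong parity class of `a` does not change the sum.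
  have main : Tendsto (fun n : ℕ => ∑ x ∈ antidiagonal n, (x.1 * √x.1 : ℝ) * a x.1 * b x.2)
      (parityAtTop (p + q)) (𝓝 (α * ∑' j, b j)) := by
    refine ((tendsto_conv (tendsto_fill ha) sb).mono_left (parityAtTop_le_atTop _)).congr' ?_
    filter_upwards [eventually_parity (p + q)] with n hn
    refine sum_congr rfl fun x hx => ?_
    have hx' := mem_antidiagonal.1 hx
    by_cases h : x.1 % 2 = p % 2
    · simp [h]
    · rw [hbq x.2 (by omega)]; simp
  have e1 : Tendsto (fun n : ℕ => ∑ x ∈ antidiagonal n, (√x.1 * a x.1) * ((x.2 : ℝ) * b x.2))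
      atTop (𝓝 0) := by
    have := tendsto_conv (u := fun n : ℕ => √n * a n)
      (tendsto_zero_of_mul_bounded (K := K) fun n => by convert hK n using 2; ring) snb
    simpa using this
  have e2 : Tendsto (fun n : ℕ => ∑ x ∈ antidiagonal n, a x.1 * ((x.2 * √x.2 : ℝ) * b x.2))
      atTop (𝓝 0) := by
    have := tendsto_conv (u := fun n : ℕ => (n * √n : ℝ) * b n)
      (tendsto_zero_of_mul_bounded (K := M) fun n => by convert hM n using 2; ring) sa
    rw [zero_mul] at this
    refine this.congr fun n => ?_
    rw [← Finset.Nat.sum_antidiagonal_swap]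
    exact sum_congr rfl fun x _ => mul_comm _ _
  have e : Tendsto (fun n : ℕ => (n * √n : ℝ) * ∑ x ∈ antidiagonal n, a x.1 * b x.2 -
      ∑ x ∈ antidiagonal n, (x.1 * √x.1 : ℝ) * a x.1 * b x.2) atTop (𝓝 0) := by
    have h12 := (e1.const_mul 2).add e2
    simp only [mul_zero, add_zero] at h12
    have hdiff : ∀ n : ℕ, (n * √n : ℝ) * ∑ x ∈ antidiagonal n, a x.1 * b x.2 -
        ∑ x ∈ antidiagonal n, (x.1 * √x.1 : ℝ) * a x.1 * b x.2 =
        ∑ x ∈ antidiagonal n,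
          (((x.1 + x.2 : ℝ)) * √(x.1 + x.2 : ℝ) - x.1 * √x.1) * (a x.1 * b x.2) := by
      intro n
      rw [mul_sum, ← sum_sub_distrib]
      refine sum_congr rfl fun x hx => ?_
      rw [← mem_antidiagonal.1 hx]; push_cast; ring
    refine squeeze_zero (fun n => ?_) (fun n => ?_) h12
    · rw [hdiff]
      exact sum_nonneg fun x _ => mul_nonneg
        (three_halves_sub_le (Nat.cast_nonneg _) (Nat.cast_nonneg _)).1
        (mul_nonneg (ha0 _) (hb0 _))
    · rw [hdiff, mul_sum, ← sum_add_distrib]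
      refine sum_le_sum fun x _ => ?_
      have := mul_le_mul_of_nonneg_right
        (three_halves_sub_le (Nat.cast_nonneg (α := ℝ) x.1) (Nat.cast_nonneg x.2)).2
        (mul_nonneg (ha0 x.1) (hb0 x.2))
      refine this.trans (le_of_eq ?_)
      ring
  have := main.add (e.mono_left (parityAtTop_le_atTop (p + q)))
  rw [add_zero] at this
  refine this.congr fun n => ?_
  ring

/-! ### The one-boundary numbers and the two-boundary limit -/

lemma C₀_nonneg (N m : ℕ) : 0 ≤ C₀ N m := by
  unfold C₀; split_ifs <;> positivity

lemma C₀_eq_zero {N m : ℕ} (h : ¬(2 ≤ m ∧ N % 2 = m % 2)) : C₀ N m = 0 := by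
  unfold C₀; rw [if_neg]; tauto

/-- Key asymptotics lemma for the two-boundary (k = 2, genus 0) model: if `D(N,m,m₂)`
is supported on `m, m₂ ≥ 2`, `N ≡ m+m₂ (mod 2)`, satisfies (eventually in `N`) Tutte's
root-edge-deletion recurrence, and has limits `N^{3/2} c^{−N} D(N,m,m₂) → L ∈ (0,∞)`
whenever `m₂ ∈ {2,3}` or `m ∈ {2,3}`, then (using also the one-boundary asymptotics
`N^{5/2} c^{−N} C₀(N,k) → φ(k) ∈ (0,∞)`) the limit
`φ(m,m₂) = lim_{N→∞, N ≡ m+m₂ (mod 2)} N^{3/2} c^{−N} D(N,m,m₂)` exists (and is finite)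
for ALL `m, m₂ ≥ 2`. Here `c = √(27/2)`. -/
theorem two_boundary_asymptotics
    (hφ : ∀ k : ℕ, 2 ≤ k → ∃ φk : ℝ, 0 < φk ∧
      Tendsto (fun n : ℕ => ((k + 2 * n : ℕ) : ℝ) ^ ((5 : ℝ) / 2) *
          Real.sqrt (27 / 2) ^ (-((k + 2 * n : ℕ) : ℝ)) * C₀ (k + 2 * n) k)
        atTop (nhds φk))
    (D : ℕ → ℕ → ℕ → ℝ) (hD0 : ∀ N m m₂, 0 ≤ D N m m₂)
    (hsupp : ∀ N m m₂ : ℕ, ¬(2 ≤ m ∧ 2 ≤ m₂ ∧ N % 2 = (m + m₂) % 2) → D N m m₂ = 0)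
    (hrec : ∀ m m₂ : ℕ, 2 ≤ m → 2 ≤ m₂ → ∃ N₀ : ℕ, ∀ N : ℕ, N₀ ≤ N →
      D N m m₂ = D (N - 1) (m + 1) m₂ + C₀ (N - 1) (m + m₂ + 1) +
        ∑ N₁ ∈ Finset.range N, ∑ k₁ ∈ Finset.range (m + 2),
          D N₁ k₁ m₂ * C₀ (N - 1 - N₁) (m + 1 - k₁))
    (hbase : ∀ m m₂ : ℕ, 2 ≤ m → 2 ≤ m₂ → (m₂ = 2 ∨ m₂ = 3 ∨ m = 2 ∨ m = 3) →
      ∃ L : ℝ, 0 < L ∧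
        Tendsto (fun n : ℕ => ((m + m₂ + 2 * n : ℕ) : ℝ) ^ ((3 : ℝ) / 2) *
            Real.sqrt (27 / 2) ^ (-((m + m₂ + 2 * n : ℕ) : ℝ)) * D (m + m₂ + 2 * n) m m₂)
          atTop (nhds L)) :
    ∀ m m₂ : ℕ, 2 ≤ m → 2 ≤ m₂ →
      ∃ L : ℝ,
        Tendsto (fun n : ℕ => ((m + m₂ + 2 * n : ℕ) : ℝ) ^ ((3 : ℝ) / 2) *
            Real.sqrt (27 / 2) ^ (-((m + m₂ + 2 * n : ℕ) : ℝ)) * D (m + m₂ + 2 * n) m m₂)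
          atTop (nhds L) := by
  have hc : 0 < √(27 / 2 : ℝ) := by positivity
  set c : ℝ := √(27 / 2) with hcdef
  -- In terms of `w n = c⁻ⁿ`, both families of hypotheses become limits along `parityAtTop`.
  set w : ℕ → ℝ := fun n => c ^ (-(n : ℝ)) with hw
  have hw0 : ∀ n, 0 ≤ w n := fun n => (Real.rpow_pos_of_pos hc _).le
  have hwadd : ∀ i j, w (i + j) = w i * w j := fun i j => by
    simp only [hw]; rw [← Real.rpow_add hc]; push_cast; ring_nf
  have hwsucc : ∀ n, w n = c * w (n + 1) := fun n => by
    have : c * w 1 = 1 := by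
      simp only [hw, Nat.cast_one, Real.rpow_neg_one]; exact mul_inv_cancel₀ hc.ne'
    rw [hwadd, mul_left_comm, this, mul_one]
  have hC : ∀ k, 2 ≤ k → ∃ β : ℝ, Tendsto (fun n : ℕ => (n * (n * √n) : ℝ) * (w n * C₀ n k))
      (parityAtTop k) (𝓝 β) := fun k hk => by
    obtain ⟨β, -, h⟩ := hφ k hk
    refine ⟨β, tendsto_parityAtTop_iff.2 (h.congr fun n => ?_)⟩
    rw [rpow_five_halves, mul_assoc]
  have toPar : ∀ m m₂ (L : ℝ), Tendsto (fun n : ℕ => ((m + m₂ + 2 * n : ℕ) : ℝ) ^ ((3 : ℝ) / 2) *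
      c ^ (-((m + m₂ + 2 * n : ℕ) : ℝ)) * D (m + m₂ + 2 * n) m m₂) atTop (𝓝 L) ↔
      Tendsto (fun n : ℕ => (n * √n : ℝ) * (w n * D n m m₂)) (parityAtTop (m + m₂)) (𝓝 L) := by
    intro m m₂ L
    rw [tendsto_parityAtTop_iff]
    refine tendsto_congr fun n => ?_
    rw [rpow_three_halves, mul_assoc]
  simp only [toPar] at hbase ⊢
  intro m m₂ hm hm₂
  induction m using Nat.strong_induction_on with
  | _ m ih =>
  rcases hm.eq_or_lt with rfl | hm'
  · obtain ⟨L, -, h⟩ := hbase 2 m₂ le_rfl hm₂ (by simp)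
    exact ⟨L, h⟩
  obtain ⟨m, rfl⟩ : ∃ r, m = r + 1 := ⟨m - 1, by omega⟩
  have hm2 : 2 ≤ m := by omega
  obtain ⟨N₀, hN₀⟩ := hrec m m₂ hm2 hm₂
  obtain ⟨L₀, hL₀⟩ := ih m (by omega) hm2
  -- The left-hand side of the recurrence, normalised at `n` rather than at `n + 1`.
  have t1 : Tendsto (fun n : ℕ => (n * √n : ℝ) * (w n * D (n + 1) m m₂))
      (parityAtTop (m + 1 + m₂)) (𝓝 (c * (1 * √1 * L₀))) := by
    have hr : Tendsto (fun n : ℕ => (n : ℝ) / (n + 1 : ℝ)) (parityAtTop (m + 1 + m₂)) (𝓝 1) :=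
      (tendsto_natCast_div_add_atTop (1 : ℝ)).mono_left (parityAtTop_le_atTop _)
    have h := hL₀.comp (tendsto_add_one_parityAtTop (p := m + m₂) (q := m + 1 + m₂) (by omega))
    refine (((hr.mul hr.sqrt).mul h).const_mul c).congr fun n => ?_
    simp only [Function.comp]
    have hn : (0 : ℝ) < n + 1 := by positivity
    rw [Real.sqrt_div (Nat.cast_nonneg n), hwsucc n]
    push_cast
    have : √(n + 1 : ℝ) ≠ 0 := (Real.sqrt_pos.2 hn).ne'
    field_simp
  have t2 : Tendsto (fun n : ℕ => (n * √n : ℝ) * (w n * C₀ n (m + m₂ + 1)))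
      (parityAtTop (m + 1 + m₂)) (𝓝 0) := by
    obtain ⟨β, hβ⟩ := hC (m + m₂ + 1) (by omega)
    obtain ⟨M, -, hM⟩ := bounded_of_parity hβ fun n hn => by
      rw [C₀_eq_zero fun h => hn h.2]; simp
    exact (tendsto_zero_of_mul_bounded (K := M) fun n => by
      convert hM n using 2; ring).mono_left (parityAtTop_le_atTop _)
  have t3 : ∀ k ∈ range (m + 2), ∃ L : ℝ, Tendsto (fun n : ℕ => (n * √n : ℝ) *
      ∑ x ∈ antidiagonal n, (w x.1 * D x.1 k m₂) * (w x.2 * C₀ x.2 (m + 1 - k)))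
      (parityAtTop (m + 1 + m₂)) (𝓝 L) := by
    intro k hk
    by_cases hk2 : 2 ≤ k ∧ 2 ≤ m + 1 - k
    · obtain ⟨α, hα⟩ := ih k (by omega) hk2.1
      obtain ⟨β, hβ⟩ := hC _ hk2.2
      have h := tendsto_conv_three_halves (fun n => mul_nonneg (hw0 n) (hD0 n k m₂))
        (fun n => mul_nonneg (hw0 n) (C₀_nonneg n _))
        (fun n hn => by rw [hsupp n k m₂ fun h => hn h.2.2, mul_zero])
        (fun n hn => by rw [C₀_eq_zero fun h => hn h.2, mul_zero]) hα hβ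
      rw [show k + m₂ + (m + 1 - k) = m + 1 + m₂ by omega] at h
      exact ⟨_, h⟩
    · refine ⟨0, tendsto_const_nhds.congr fun n => ?_⟩
      rw [sum_eq_zero, mul_zero]
      intro x _
      by_cases h : 2 ≤ k
      · rw [C₀_eq_zero fun h' => hk2 ⟨h, h'.1⟩]; simp
      · rw [hsupp _ _ _ fun h' => h h'.1]; simp
  choose! Λ hΛ using t3
  refine ⟨_, ((t1.sub t2).sub (tendsto_finsetSum (range (m + 2)) hΛ)).congr' ?_⟩
  filter_upwards [(parityAtTop_le_atTop (m + 1 + m₂)) (eventually_ge_atTop N₀)] with n hn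
  have hn' := hN₀ (n + 1) (by omega)
  simp only [Nat.add_sub_cancel] at hn'
  have hsum : ∑ k ∈ range (m + 2), (n * √n : ℝ) *
      ∑ x ∈ antidiagonal n, (w x.1 * D x.1 k m₂) * (w x.2 * C₀ x.2 (m + 1 - k)) =
      (n * √n : ℝ) * (w n * ∑ N₁ ∈ range (n + 1), ∑ k₁ ∈ range (m + 2),
          D N₁ k₁ m₂ * C₀ (n - N₁) (m + 1 - k₁)) := by
    rw [← mul_sum, sum_comm, Finset.Nat.sum_antidiagonal_eq_sum_range_succ_mk]
    congr 1
    rw [mul_sum]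
    refine sum_congr rfl fun i hi => ?_
    rw [mul_sum]
    refine sum_congr rfl fun k _ => ?_
    have hi' := mem_range.1 hi
    have : w n = w i * w (n - i) := by rw [← hwadd]; congr 1; omega
    rw [this]; ring
  rw [hsum, hn']
  ring
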